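/- arXiv:0901.0455 — 6 statements merged into one kernel-verified Lean document; each statement's English description precedes it below -/
import Mathlib

section
/- Let y ∈ K, where K is the convex support, and suppose θ̂₁, θ̂₂ ∈ Θ both attain the supremum of the log likelihood l over Θ. Then θ̂₁ − θ̂₂ is a direction of constancy, that is, ⟨x − y, θ̂₁ − θ̂₂⟩ = 0 for ν-almost every x; consequently μ_{θ̂₁} = μ_{θ̂₂}. -/
open MeasureTheory Real Filter Topology Set
open scoped RealInnerProductSpace ENNReal

/-- The normalizing integral (Laplace transform) `∫ exp⟪x, θ⟫ dν(x)` as an `ℝ≥0∞`-valued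
lower integral; `θ` lies in the natural parameter space iff this is finite. -/
noncomputable def partitionFn {p : ℕ} (ν : Measure (EuclideanSpace ℝ (Fin p)))
    (θ : EuclideanSpace ℝ (Fin p)) : ℝ≥0∞ :=
  ∫⁻ x, ENNReal.ofReal (Real.exp ⟪x, θ⟫) ∂ν

/-- The cumulant function `c(θ) = log ∫ exp⟪x, θ⟫ dν(x)` (real-valued; meaningful on the
natural parameter space `{θ | partitionFn ν θ < ⊤}`). -/
noncomputable def cumulant {p : ℕ} (ν : Measure (EuclideanSpace ℝ (Fin p)))
    (θ : EuclideanSpace ℝ (Fin p)) : ℝ :=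
  Real.log (partitionFn ν θ).toReal

/-- The extended-real-valued cumulant function, equal to `⊤` off the natural parameter space. -/
noncomputable def ecumulant {p : ℕ} (ν : Measure (EuclideanSpace ℝ (Fin p)))
    (θ : EuclideanSpace ℝ (Fin p)) : EReal :=
  if partitionFn ν θ = ⊤ then ⊤ else ((cumulant ν θ : ℝ) : EReal)

/-- The member of the full exponential family generated by `ν` with natural parameter `θ`:
the measure with density `x ↦ exp(⟪x, θ⟫ − c(θ))` with respect to `ν`. -/
noncomputable def expFam {p : ℕ} (ν : Measure (EuclideanSpace ℝ (Fin p)))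
    (θ : EuclideanSpace ℝ (Fin p)) : Measure (EuclideanSpace ℝ (Fin p)) :=
  ν.withDensity fun x => ENNReal.ofReal (Real.exp (⟪x, θ⟫ - cumulant ν θ))

/-- `K` is the convex support of `ν`: the smallest closed convex set of full `ν`-measure. -/
def IsConvexSupport {p : ℕ} (ν : Measure (EuclideanSpace ℝ (Fin p)))
    (K : Set (EuclideanSpace ℝ (Fin p))) : Prop :=
  IsClosed K ∧ Convex ℝ K ∧ ν Kᶜ = 0 ∧
    ∀ C : Set (EuclideanSpace ℝ (Fin p)), IsClosed C → Convex ℝ C → ν Cᶜ = 0 → K ⊆ C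

/-!
The log likelihood is concave, and its failure to be strictly concave is the equality case of
Hölder's inequality. If `θ₁` and `θ₂` are both maximizers, so is their midpoint, so equality holds
in `log ∫ exp ((f + g) / 2) ≤ (log ∫ exp f + log ∫ exp g) / 2` for `f = ⟪·, θ₁⟫` and `g = ⟪·, θ₂⟫`.
Once `exp f` and `exp g` are normalized to integrate to `1`, this says that a pointwise convexity
inequality for `exp` becomes an equality after integration, hence holds with equality a.e.; by
strict convexity of `exp` the two normalized densities agree a.e.
-/

section LogIntegralExp

variable {Ω : Type*} [MeasurableSpace Ω] {μ : Measure Ω} {f g : Ω → ℝ} {a b : ℝ}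

theorem ae_eq_of_strictConvexOn_of_le_integral {E : Type*} [AddCommMonoid E] [Module ℝ E]
    {s : Set E} {φ : E → ℝ} (hφ : StrictConvexOn ℝ s φ) {u v : Ω → E}
    (hus : ∀ᵐ ω ∂μ, u ω ∈ s) (hvs : ∀ᵐ ω ∂μ, v ω ∈ s)
    (ha : 0 < a) (hb : 0 < b) (hab : a + b = 1)
    (hu : Integrable (fun ω ↦ φ (u ω)) μ) (hv : Integrable (fun ω ↦ φ (v ω)) μ)
    (huv : Integrable (fun ω ↦ φ (a • u ω + b • v ω)) μ)
    (hle : a * ∫ ω, φ (u ω) ∂μ + b * ∫ ω, φ (v ω) ∂μ ≤ ∫ ω, φ (a • u ω + b • v ω) ∂μ) :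
    u =ᵐ[μ] v := by
  have h_chord : Integrable (fun ω ↦ a * φ (u ω) + b * φ (v ω)) μ :=
    (hu.const_mul a).add (hv.const_mul b)
  have h_convex : ∀ᵐ ω ∂μ, φ (a • u ω + b • v ω) ≤ a * φ (u ω) + b * φ (v ω) := by
    filter_upwards [hus, hvs] with ω huω hvω
    exact hφ.convexOn.2 huω hvω ha.le hb.le hab
  have h_integral : ∫ ω, φ (a • u ω + b • v ω) ∂μ = ∫ ω, a * φ (u ω) + b * φ (v ω) ∂μ := by
    refine le_antisymm (integral_mono_ae huv h_chord h_convex) ?_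
    rwa [integral_add (hu.const_mul a) (hv.const_mul b), integral_const_mul, integral_const_mul]
  filter_upwards [hus, hvs, (integral_eq_iff_of_ae_le huv h_chord h_convex).1 h_integral]
    with ω huω hvω h_eq
  by_contra hne
  exact (hφ.2 huω hvω hne ha hb hab).ne h_eq

theorem integrable_exp_convex_comb (hf : Integrable (fun ω ↦ exp (f ω)) μ)
    (hg : Integrable (fun ω ↦ exp (g ω)) μ) (ha : 0 ≤ a) (hb : 0 ≤ b) (hab : a + b = 1) :
    Integrable (fun ω ↦ exp (a * f ω + b * g ω)) μ := by
  have hf_meas : AEMeasurable f μ := aemeasurable_of_aemeasurable_exp hf.aemeasurable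
  have hg_meas : AEMeasurable g μ := aemeasurable_of_aemeasurable_exp hg.aemeasurable
  refine ((hf.const_mul a).add (hg.const_mul b)).mono' (by fun_prop) (ae_of_all _ fun ω ↦ ?_)
  rw [norm_of_nonneg (exp_pos _).le]
  exact convexOn_exp.2 (mem_univ (f ω)) (mem_univ (g ω)) ha hb hab

theorem integral_exp_sub_const (f : Ω → ℝ) (c : ℝ) :
    ∫ ω, exp (f ω - c) ∂μ = (∫ ω, exp (f ω) ∂μ) / exp c := by
  simp only [exp_sub, integral_div]

theorem integral_exp_sub_log_integral_exp [NeZero μ] (hf : Integrable (fun ω ↦ exp (f ω)) μ) :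
    ∫ ω, exp (f ω - log (∫ ω', exp (f ω') ∂μ)) ∂μ = 1 := by
  rw [integral_exp_sub_const, exp_log (integral_exp_pos hf), div_self (integral_exp_pos hf).ne']

theorem ae_eq_of_le_log_integral_exp_convex_comb (hf : Integrable (fun ω ↦ exp (f ω)) μ)
    (hg : Integrable (fun ω ↦ exp (g ω)) μ) (ha : 0 < a) (hb : 0 < b) (hab : a + b = 1)
    (hle : a * log (∫ ω, exp (f ω) ∂μ) + b * log (∫ ω, exp (g ω) ∂μ) ≤
      log (∫ ω, exp (a * f ω + b * g ω) ∂μ)) :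
    (fun ω ↦ f ω - log (∫ ω', exp (f ω') ∂μ)) =ᵐ[μ]
      fun ω ↦ g ω - log (∫ ω', exp (g ω') ∂μ) := by
  rcases eq_zero_or_neZero μ with rfl | _
  · simp [EventuallyEq]
  have h_comb := integrable_exp_convex_comb hf hg ha.le hb.le hab
  set cf := log (∫ ω, exp (f ω) ∂μ)
  set cg := log (∫ ω, exp (g ω) ∂μ)
  have h_shift (ω : Ω) : a • (f ω - cf) + b • (g ω - cg) =
      a * f ω + b * g ω - (a * cf + b * cg) := by
    simp only [smul_eq_mul]
    ring
  have integrable_exp_sub {h : Ω → ℝ} (hh : Integrable (fun ω ↦ exp (h ω)) μ) (c : ℝ) :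
      Integrable (fun ω ↦ exp (h ω - c)) μ := by
    simpa only [exp_sub] using hh.div_const (exp c)
  refine ae_eq_of_strictConvexOn_of_le_integral strictConvexOn_exp (ae_of_all _ fun _ ↦ mem_univ _)
    (ae_of_all _ fun _ ↦ mem_univ _) ha hb hab (integrable_exp_sub hf cf)
    (integrable_exp_sub hg cg) ?_ ?_
  · simpa only [h_shift] using integrable_exp_sub h_comb (a * cf + b * cg)
  · simp only [h_shift]
    rw [integral_exp_sub_log_integral_exp hf, integral_exp_sub_log_integral_exp hg,
      integral_exp_sub_const, mul_one, mul_one, hab, one_le_div (exp_pos _)]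
    exact (le_log_iff_exp_le (integral_exp_pos h_comb)).1 hle

theorem tilted_eq_withDensity_exp_sub_log (hf : Integrable (fun ω ↦ exp (f ω)) μ) :
    μ.tilted f =
      μ.withDensity fun ω ↦ ENNReal.ofReal (exp (f ω - log (∫ ω', exp (f ω') ∂μ))) := by
  rcases eq_zero_or_neZero μ with rfl | _
  · simp
  · simp only [Measure.tilted, exp_sub, exp_log (integral_exp_pos hf)]

end LogIntegralExp

section ExponentialFamily

variable {Ω V : Type*} [MeasurableSpace Ω] [AddCommGroup V] [Module ℝ V]

/-- The natural parameter space of the exponential family generated by the measure `ν` and the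
canonical statistic `T`. The statistic takes values in the algebraic dual of the parameter space
`V`, so that `T ω θ` is the canonical pairing. -/
def naturalParameterSpace (ν : Measure Ω) (T : Ω → V →ₗ[ℝ] ℝ) : Set V :=
  {θ | Integrable (fun ω ↦ exp (T ω θ)) ν}

/-- The log likelihood of the exponential family generated by `ν` and `T`, for the value `y` of
the canonical statistic. Outside `naturalParameterSpace ν T` the integral, and hence its `log`, is
`0`, so there the value is meaningless. -/
noncomputable def logLikelihood (ν : Measure Ω) (T : Ω → V →ₗ[ℝ] ℝ) (y : V →ₗ[ℝ] ℝ) (θ : V) : ℝ :=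
  y θ - log (∫ ω, exp (T ω θ) ∂ν)

variable {ν : Measure Ω} {T : Ω → V →ₗ[ℝ] ℝ} {y : V →ₗ[ℝ] ℝ} {θ₁ θ₂ : V} {a b : ℝ}

theorem convex_naturalParameterSpace : Convex ℝ (naturalParameterSpace ν T) := by
  intro θ₁ h₁ θ₂ h₂ a b ha hb hab
  simpa only [naturalParameterSpace, mem_ofPred_eq, map_add, map_smul, smul_eq_mul] using
    integrable_exp_convex_comb h₁ h₂ ha hb hab

theorem ae_eq_of_logLikelihood_convex_comb_le (h₁ : θ₁ ∈ naturalParameterSpace ν T)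
    (h₂ : θ₂ ∈ naturalParameterSpace ν T) (ha : 0 < a) (hb : 0 < b) (hab : a + b = 1)
    (hle : logLikelihood ν T y (a • θ₁ + b • θ₂) ≤
      a * logLikelihood ν T y θ₁ + b * logLikelihood ν T y θ₂) :
    (fun ω ↦ T ω θ₁ - log (∫ ω', exp (T ω' θ₁) ∂ν)) =ᵐ[ν]
      fun ω ↦ T ω θ₂ - log (∫ ω', exp (T ω' θ₂) ∂ν) := by
  refine ae_eq_of_le_log_integral_exp_convex_comb h₁ h₂ ha hb hab ?_
  simp only [logLikelihood, map_add, map_smul, smul_eq_mul] at hle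
  linarith

theorem mle_diff_direction_of_constancy_general
    (h₁ : θ₁ ∈ naturalParameterSpace ν T) (h₂ : θ₂ ∈ naturalParameterSpace ν T)
    (hmax₁ : IsMaxOn (logLikelihood ν T y) (naturalParameterSpace ν T) θ₁)
    (hmax₂ : IsMaxOn (logLikelihood ν T y) (naturalParameterSpace ν T) θ₂) :
    (∀ᵐ ω ∂ν, (T ω - y) (θ₁ - θ₂) = 0) ∧
      ν.tilted (fun ω ↦ T ω θ₁) = ν.tilted fun ω ↦ T ω θ₂ := by
  have h_eq : logLikelihood ν T y θ₁ = logLikelihood ν T y θ₂ := le_antisymm (hmax₂ h₁) (hmax₁ h₂)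
  have h_mid : logLikelihood ν T y ((2⁻¹ : ℝ) • θ₁ + (2⁻¹ : ℝ) • θ₂) ≤
      2⁻¹ * logLikelihood ν T y θ₁ + 2⁻¹ * logLikelihood ν T y θ₂ := by
    have h_mem : (2⁻¹ : ℝ) • θ₁ + (2⁻¹ : ℝ) • θ₂ ∈ naturalParameterSpace ν T :=
      convex_naturalParameterSpace h₁ h₂ (by norm_num) (by norm_num) (by norm_num)
    linarith [isMaxOn_iff.1 hmax₁ _ h_mem]
  have h_ae := ae_eq_of_logLikelihood_convex_comb_le h₁ h₂ (by norm_num) (by norm_num)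
    (by norm_num) h_mid
  constructor
  · filter_upwards [h_ae] with ω hω
    simp only [logLikelihood] at h_eq
    simp only [LinearMap.sub_apply, map_sub]
    linarith
  · rw [tilted_eq_withDensity_exp_sub_log h₁, tilted_eq_withDensity_exp_sub_log h₂]
    refine withDensity_congr_ae ?_
    filter_upwards [h_ae] with ω hω
    rw [hω]

end ExponentialFamily

section EuclideanSpace

variable {p : ℕ} {ν : Measure (EuclideanSpace ℝ (Fin p))} {θ : EuclideanSpace ℝ (Fin p)}

theorem partitionFn_lt_top_iff : partitionFn ν θ < ⊤ ↔ Integrable (fun x ↦ exp ⟪x, θ⟫) ν := by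
  rw [lt_top_iff_ne_top, partitionFn]
  exact lintegral_ofReal_ne_top_iff_integrable (by fun_prop) (ae_of_all _ fun x ↦ (exp_pos _).le)

theorem cumulant_eq_log_integral : cumulant ν θ = log (∫ x, exp ⟪x, θ⟫ ∂ν) := by
  rw [cumulant, partitionFn,
    integral_eq_lintegral_of_nonneg_ae (ae_of_all _ fun x ↦ (exp_pos _).le) (by fun_prop)]

theorem expFam_eq_tilted (h : partitionFn ν θ < ⊤) : expFam ν θ = ν.tilted fun x ↦ ⟪x, θ⟫ := by
  rw [tilted_eq_withDensity_exp_sub_log (partitionFn_lt_top_iff.1 h), ← cumulant_eq_log_integral,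
    expFam]

end EuclideanSpace

/-- If `θ̂₁` and `θ̂₂` both maximize the log likelihood `θ ↦ ⟪y, θ⟫ − c(θ)` over the natural
parameter space, where `y` lies in the convex support, then `θ̂₁ − θ̂₂` is a direction of
constancy (`⟪x − y, θ̂₁ − θ̂₂⟫ = 0` for `ν`-a.e. `x`) and the two exponential family measures
coincide. -/
theorem mle_diff_direction_of_constancy {p : ℕ} (hp : 0 < p)
    (ν : Measure (EuclideanSpace ℝ (Fin p))) [SigmaFinite ν] (hν : ν ≠ 0)
    (hΘ : {θ : EuclideanSpace ℝ (Fin p) | partitionFn ν θ < ⊤}.Nonempty)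
    (K : Set (EuclideanSpace ℝ (Fin p))) (hK : IsConvexSupport ν K)
    (y : EuclideanSpace ℝ (Fin p)) (hy : y ∈ K)
    (θhat₁ θhat₂ : EuclideanSpace ℝ (Fin p))
    (h₁ : partitionFn ν θhat₁ < ⊤) (h₂ : partitionFn ν θhat₂ < ⊤)
    (hmax₁ : ∀ θ : EuclideanSpace ℝ (Fin p), partitionFn ν θ < ⊤ →
      ⟪y, θ⟫ - cumulant ν θ ≤ ⟪y, θhat₁⟫ - cumulant ν θhat₁)
    (hmax₂ : ∀ θ : EuclideanSpace ℝ (Fin p), partitionFn ν θ < ⊤ →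
      ⟪y, θ⟫ - cumulant ν θ ≤ ⟪y, θhat₂⟫ - cumulant ν θhat₂) :
    (∀ᵐ x ∂ν, ⟪x - y, θhat₁ - θhat₂⟫ = 0) ∧ expFam ν θhat₁ = expFam ν θhat₂ := by
  rw [expFam_eq_tilted h₁, expFam_eq_tilted h₂]
  simp only [partitionFn_lt_top_iff, cumulant_eq_log_integral] at h₁ h₂ hmax₁ hmax₂
  simpa only [← map_sub, innerₗ_apply_apply] using
    mle_diff_direction_of_constancy_general (T := innerₗ _) (y := innerₗ _ y) h₁ h₂ hmax₁ hmax₂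
end

section
/- Let δ ∈ ℝ^p and y ∈ ℝ^p. The following are equivalent: (i) there exists θ ∈ Θ such that the function s ↦ ⟨y, θ + sδ⟩ − c(θ + sδ), with values in [−∞, ∞), is nondecreasing on ℝ; (ii) for all θ ∈ Θ the function s ↦ ⟨y, θ + sδ⟩ − c(θ + sδ) is nondecreasing on ℝ; (iii) ⟨x − y, δ⟩ ≤ 0 for ν-almost every x. -/
open MeasureTheory Real Filter Topology Set
open scoped RealInnerProductSpace ENNReal

/-! Subtracting `⟪y, θ⟫` recentres the Laplace transform at `y`: the objective
`⟪y, θ⟫ - log ∫ exp⟪x, θ⟫ dν(x)` is `-log ∫ exp⟪x - y, θ⟫ dν(x)`. So along `θ + s • δ` it is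
nondecreasing iff `s ↦ ∫ exp(⟪x - y, θ⟫ + s⟪x - y, δ⟫) dν(x)` is nonincreasing. If
`⟪x - y, δ⟫ ≤ 0` a.e., the integrand itself is nonincreasing in `s`. Conversely, if the integrals
stay below their finite value at `s = 0`, Fatou's lemma shows that the integrand cannot tend to
`∞` on a set of positive measure, which it does wherever `⟪x - y, δ⟫ > 0`. -/

section ExpIntegral

variable {α : Type*} [MeasurableSpace α] {μ : Measure α}

lemma lintegral_exp_ne_zero [NeZero μ] {f : α → ℝ} (hf : AEMeasurable f μ) :
    ∫⁻ x, ENNReal.ofReal (exp (f x)) ∂μ ≠ 0 := by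
  rw [Ne, lintegral_eq_zero_iff' (by fun_prop)]
  intro hzero
  obtain ⟨x, hx⟩ := hzero.exists
  exact (ENNReal.ofReal_pos.2 (exp_pos (f x))).ne' hx

lemma ae_not_tendsto_top_of_liminf_lintegral_ne_top {F : ℕ → α → ℝ≥0∞}
    (hF : ∀ n, AEMeasurable (F n) μ) (hlim : liminf (fun n => ∫⁻ x, F n x ∂μ) atTop ≠ ⊤) :
    ∀ᵐ x ∂μ, ¬ Tendsto (fun n => F n x) atTop (𝓝 ⊤) := by
  have hmeas : AEMeasurable (fun x => liminf (fun n => F n x) atTop) μ := by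
    simp only [liminf_eq_iSup_iInf_of_nat]
    exact .iSup fun n => .biInf _ (to_countable _) fun i _ => hF i
  have hfatou : ∫⁻ x, liminf (fun n => F n x) atTop ∂μ ≠ ⊤ :=
    ne_top_of_le_ne_top hlim (lintegral_liminf_le' hF)
  filter_upwards [ae_lt_top' hmeas hfatou] with x hx htop
  exact hx.ne htop.liminf_eq

lemma antitone_lintegral_exp_add_mul_iff {f g : α → ℝ} (hf : AEMeasurable f μ)
    (hg : AEMeasurable g μ) (hfin : ∫⁻ x, ENNReal.ofReal (exp (f x)) ∂μ ≠ ⊤) :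
    Antitone (fun s : ℝ => ∫⁻ x, ENNReal.ofReal (exp (f x + s * g x)) ∂μ) ↔
      ∀ᵐ x ∂μ, g x ≤ 0 := by
  constructor
  · intro hanti
    have hle (n : ℕ) : ∫⁻ x, ENNReal.ofReal (exp (f x + n * g x)) ∂μ ≤
        ∫⁻ x, ENNReal.ofReal (exp (f x)) ∂μ := by
      simpa only [zero_mul, add_zero] using hanti n.cast_nonneg
    have hlim : liminf (fun n : ℕ => ∫⁻ x, ENNReal.ofReal (exp (f x + n * g x)) ∂μ) atTop ≠ ⊤ :=
      ne_top_of_le_ne_top hfin (liminf_le_of_frequently_le' (Frequently.of_forall hle))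
    filter_upwards [ae_not_tendsto_top_of_liminf_lintegral_ne_top (fun n => by fun_prop) hlim]
      with x hx
    contrapose! hx
    exact ENNReal.tendsto_ofReal_atTop.comp <| tendsto_exp_atTop.comp <|
      tendsto_atTop_add_const_left _ _ <| tendsto_natCast_atTop_atTop.atTop_mul_const hx
  · intro hg_nonpos s t hst
    refine lintegral_mono_ae ?_
    filter_upwards [hg_nonpos] with x hx
    have : t * g x ≤ s * g x := mul_le_mul_of_nonpos_right hst hx
    gcongr

end ExpIntegral

section LaplaceTransform

variable {E : Type*} [SeminormedAddCommGroup E] [InnerProductSpace ℝ E] [MeasurableSpace E]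

/-- The Laplace transform `θ ↦ ∫ exp⟪x, θ⟫ dν(x)` of a measure on an arbitrary real inner product
space, extending `partitionFn` to infinite dimension. It is `ℝ≥0∞`-valued, so that
`ENNReal.log (laplaceTransform ν θ)` is the cumulant function with its values `±∞`. -/
noncomputable def laplaceTransform (ν : Measure E) (θ : E) : ℝ≥0∞ :=
  ∫⁻ x, ENNReal.ofReal (exp ⟪x, θ⟫) ∂ν

lemma lintegral_exp_inner_sub (ν : Measure E) (y θ : E) :
    ∫⁻ x, ENNReal.ofReal (exp ⟪x - y, θ⟫) ∂ν =
      ENNReal.ofReal (exp (-⟪y, θ⟫)) * laplaceTransform ν θ := by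
  rw [laplaceTransform, ← lintegral_const_mul' _ _ ENNReal.ofReal_ne_top]
  simp only [inner_sub_left, neg_add_eq_sub, ← exp_add, ← ENNReal.ofReal_mul (exp_nonneg _)]

lemma inner_sub_log_laplaceTransform (ν : Measure E) (y θ : E) :
    ((⟪y, θ⟫ : ℝ) : EReal) - ENNReal.log (laplaceTransform ν θ) =
      -ENNReal.log (∫⁻ x, ENNReal.ofReal (exp ⟪x - y, θ⟫) ∂ν) := by
  rw [lintegral_exp_inner_sub, ENNReal.log_mul_add, ENNReal.log_ofReal_of_pos (exp_pos _), log_exp,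
    EReal.neg_add (.inl (EReal.coe_ne_bot _)) (.inl (EReal.coe_ne_top _)), EReal.coe_neg, neg_neg]

variable [OpensMeasurableSpace E]

lemma monotone_inner_sub_log_laplaceTransform_iff {ν : Measure E} {θ : E}
    (hθ : laplaceTransform ν θ < ⊤) (δ y : E) :
    Monotone (fun s : ℝ =>
        ((⟪y, θ + s • δ⟫ : ℝ) : EReal) - ENNReal.log (laplaceTransform ν (θ + s • δ))) ↔
      ∀ᵐ x ∂ν, ⟪x - y, δ⟫ ≤ 0 := by
  have hfin : ∫⁻ x, ENNReal.ofReal (exp ⟪x - y, θ⟫) ∂ν ≠ ⊤ := by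
    rw [lintegral_exp_inner_sub]
    exact ENNReal.mul_ne_top ENNReal.ofReal_ne_top hθ.ne
  have hmeas (η : E) : AEMeasurable (fun x : E => ⟪x - y, η⟫) ν :=
    (Continuous.measurable (by fun_prop)).aemeasurable
  rw [← antitone_lintegral_exp_add_mul_iff (hmeas θ) (hmeas δ) hfin]
  simp_rw [inner_sub_log_laplaceTransform, inner_add_right, real_inner_smul_right, Monotone,
    Antitone, EReal.neg_le_neg_iff, ENNReal.log_le_log_iff]

theorem direction_of_recession_tfae_general (ν : Measure E)
    (hΘ : {θ : E | laplaceTransform ν θ < ⊤}.Nonempty) (δ y : E) :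
    List.TFAE
      [ ∃ θ : E, laplaceTransform ν θ < ⊤ ∧
          Monotone (fun s : ℝ =>
            ((⟪y, θ + s • δ⟫ : ℝ) : EReal) - ENNReal.log (laplaceTransform ν (θ + s • δ))),
        ∀ θ : E, laplaceTransform ν θ < ⊤ →
          Monotone (fun s : ℝ =>
            ((⟪y, θ + s • δ⟫ : ℝ) : EReal) - ENNReal.log (laplaceTransform ν (θ + s • δ))),
        ∀ᵐ x ∂ν, ⟪x - y, δ⟫ ≤ 0 ] := by
  tfae_have 1 → 3 := fun ⟨_, hθ, hmono⟩ =>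
    (monotone_inner_sub_log_laplaceTransform_iff hθ δ y).1 hmono
  tfae_have 3 → 2 := fun hδ _ hθ => (monotone_inner_sub_log_laplaceTransform_iff hθ δ y).2 hδ
  tfae_have 2 → 1 := fun hall => hΘ.imp fun θ hθ => ⟨hθ, hall θ hθ⟩
  tfae_finish

end LaplaceTransform

lemma ecumulant_eq_log_partitionFn {p : ℕ} (ν : Measure (EuclideanSpace ℝ (Fin p))) [NeZero ν]
    (θ : EuclideanSpace ℝ (Fin p)) : ecumulant ν θ = ENNReal.log (partitionFn ν θ) := by
  have hne : partitionFn ν θ ≠ 0 := lintegral_exp_ne_zero (by fun_prop)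
  unfold ecumulant cumulant
  split_ifs with htop
  · rw [htop, ENNReal.log_top]
  · rw [ENNReal.log_pos_real hne htop]

/-- Characterization of directions of recession: the following are equivalent. (i) For some
`θ` in the natural parameter space, `s ↦ ⟪y, θ + sδ⟫ − c(θ + sδ)` (valued in `[−∞, ∞)`) is
nondecreasing; (ii) the same for all `θ` in the natural parameter space; (iii)
`⟪x − y, δ⟫ ≤ 0` for `ν`-a.e. `x`. -/
theorem direction_of_recession_tfae {p : ℕ} (hp : 0 < p)
    (ν : Measure (EuclideanSpace ℝ (Fin p))) [SigmaFinite ν] (hν : ν ≠ 0)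
    (hΘ : {θ : EuclideanSpace ℝ (Fin p) | partitionFn ν θ < ⊤}.Nonempty)
    (δ y : EuclideanSpace ℝ (Fin p)) :
    List.TFAE
      [ ∃ θ : EuclideanSpace ℝ (Fin p), partitionFn ν θ < ⊤ ∧
          Monotone (fun s : ℝ =>
            ((⟪y, θ + s • δ⟫ : ℝ) : EReal) - ecumulant ν (θ + s • δ)),
        ∀ θ : EuclideanSpace ℝ (Fin p), partitionFn ν θ < ⊤ →
          Monotone (fun s : ℝ =>
            ((⟪y, θ + s • δ⟫ : ℝ) : EReal) - ecumulant ν (θ + s • δ)),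
        ∀ᵐ x ∂ν, ⟪x - y, δ⟫ ≤ 0 ] := by
  have : NeZero ν := ⟨hν⟩
  simp only [ecumulant_eq_log_partitionFn]
  exact direction_of_recession_tfae_general ν hΘ δ y
end

section
/- Let δ ∈ ℝ^p and y ∈ K, where K is the convex support. Then ⟨x − y, δ⟩ ≤ 0 for ν-almost every x if and only if ⟨w − y, δ⟩ ≤ 0 for every w ∈ K, i.e. if and only if δ lies in the normal cone N_K(y). -/
open MeasureTheory Real Filter Topology Set
open scoped RealInnerProductSpace ENNReal

/-- The closed convex sets of full `ν`-measure; the convex support of `ν` is the least of them. -/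
def fullClosedConvexSets {E : Type*} [AddCommMonoid E] [SMul ℝ E] [TopologicalSpace E]
    [MeasurableSpace E] (ν : Measure E) : Set (Set E) :=
  {C | IsClosed C ∧ Convex ℝ C ∧ ν Cᶜ = 0}

lemma IsConvexSupport.isLeast {p : ℕ} {ν : Measure (EuclideanSpace ℝ (Fin p))}
    {K : Set (EuclideanSpace ℝ (Fin p))} (hK : IsConvexSupport ν K) :
    IsLeast (fullClosedConvexSets ν) K := by
  obtain ⟨hclosed, hconvex, hfull, hmin⟩ := hK
  exact ⟨⟨hclosed, hconvex, hfull⟩, fun C hC ↦ hmin C hC.1 hC.2.1 hC.2.2⟩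

lemma ae_mem_iff_subset_of_isLeast {E : Type*} [AddCommMonoid E] [SMul ℝ E] [TopologicalSpace E]
    [MeasurableSpace E] {ν : Measure E} {K C : Set E} (hK : IsLeast (fullClosedConvexSets ν) K)
    (hclosed : IsClosed C) (hconvex : Convex ℝ C) :
    (∀ᵐ x ∂ν, x ∈ C) ↔ K ⊆ C := by
  have hfull : ∀ᵐ x ∂ν, x ∈ K := hK.1.2.2
  exact ⟨fun hC ↦ hK.2 ⟨hclosed, hconvex, hC⟩, fun hKC ↦ hfull.mono hKC⟩

section HalfSpace

variable {E : Type*} [SeminormedAddCommGroup E] [InnerProductSpace ℝ E] (y δ : E)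

lemma isClosed_setOf_inner_sub_nonpos : IsClosed {x : E | ⟪x - y, δ⟫ ≤ 0} :=
  isClosed_le (by fun_prop) continuous_const

lemma convex_setOf_inner_sub_nonpos : Convex ℝ {x : E | ⟪x - y, δ⟫ ≤ 0} := by
  simp only [inner_sub_left, sub_nonpos]
  exact convex_halfSpace_le ((innerₗ E).flip δ).isLinear ⟪y, δ⟫

theorem ae_inner_le_iff_mem_normalCone_general [MeasurableSpace E] {ν : Measure E} {K : Set E}
    (hK : IsLeast (fullClosedConvexSets ν) K) :
    (∀ᵐ x ∂ν, ⟪x - y, δ⟫ ≤ 0) ↔ ∀ w ∈ K, ⟪w - y, δ⟫ ≤ 0 :=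
  ae_mem_iff_subset_of_isLeast hK (isClosed_setOf_inner_sub_nonpos y δ)
    (convex_setOf_inner_sub_nonpos y δ)

end HalfSpace

/-- For `y` in the convex support `K`: `⟪x − y, δ⟫ ≤ 0` for `ν`-a.e. `x` iff
`⟪w − y, δ⟫ ≤ 0` for every `w ∈ K`, i.e. iff `δ` lies in the normal cone `N_K(y)`. -/
theorem ae_inner_le_iff_mem_normalCone {p : ℕ} (hp : 0 < p)
    (ν : Measure (EuclideanSpace ℝ (Fin p))) [SigmaFinite ν] (hν : ν ≠ 0)
    (K : Set (EuclideanSpace ℝ (Fin p))) (hK : IsConvexSupport ν K)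
    (y : EuclideanSpace ℝ (Fin p)) (hy : y ∈ K)
    (δ : EuclideanSpace ℝ (Fin p)) :
    (∀ᵐ x ∂ν, ⟪x - y, δ⟫ ≤ 0) ↔ ∀ w ∈ K, ⟪w - y, δ⟫ ≤ 0 :=
  ae_inner_le_iff_mem_normalCone_general y δ hK.isLeast
end

section
/- Let y ∈ ℝ^p, let δ ∈ ℝ^p satisfy ⟨x − y, δ⟩ ≤ 0 for ν-almost every x, and set H = {x ∈ ℝ^p : ⟨x − y, δ⟩ = 0}. Then for every θ ∈ Θ and every s ≥ 0 one has θ + sδ ∈ Θ and μ_{θ+sδ}(H) = exp(s⟨y, δ⟩ − c(θ + sδ) + c(θ)) · μ_θ(H). -/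
open MeasureTheory Real Filter Topology Set
open scoped RealInnerProductSpace ENNReal

/-!
Moving the natural parameter from `θ` to `θ + η` multiplies the density by `exp ⟪x, η⟫`, up to the
ratio of the normalizing constants. For `η = s • δ` this factor is a.e. at most `exp (s * ⟪y, δ⟫)`,
so the normalizing integral stays finite, and on the hyperplane `H` it is equal to this constant, so
the measure of `H` is merely rescaled.
-/

section ParameterShift

variable {p : ℕ} {ν : Measure (EuclideanSpace ℝ (Fin p))}

theorem partitionFn_add_le_of_ae_inner_le (θ : EuclideanSpace ℝ (Fin p))
    {η : EuclideanSpace ℝ (Fin p)} {b : ℝ} (hη : ∀ᵐ x ∂ν, ⟪x, η⟫ ≤ b) :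
    partitionFn ν (θ + η) ≤ ENNReal.ofReal (exp b) * partitionFn ν θ := by
  unfold partitionFn
  rw [← lintegral_const_mul' _ _ ENNReal.ofReal_ne_top]
  refine lintegral_mono_ae ?_
  filter_upwards [hη] with x hx
  calc ENNReal.ofReal (exp ⟪x, θ + η⟫)
      = ENNReal.ofReal (exp ⟪x, η⟫) * ENNReal.ofReal (exp ⟪x, θ⟫) := by
        rw [inner_add_right, add_comm, exp_add, ENNReal.ofReal_mul (exp_nonneg _)]
    _ ≤ ENNReal.ofReal (exp b) * ENNReal.ofReal (exp ⟪x, θ⟫) := by gcongr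

theorem expFam_add (ν : Measure (EuclideanSpace ℝ (Fin p))) (θ η : EuclideanSpace ℝ (Fin p)) :
    expFam ν (θ + η) = (expFam ν θ).withDensity fun x =>
      ENNReal.ofReal (exp (⟪x, η⟫ - cumulant ν (θ + η) + cumulant ν θ)) := by
  unfold expFam
  rw [← withDensity_mul ν (by fun_prop) (by fun_prop)]
  congr 1 with x
  rw [Pi.mul_apply, ← ENNReal.ofReal_mul (exp_nonneg _), ← exp_add, inner_add_right]
  ring_nf

theorem expFam_add_apply_of_inner_eq (θ : EuclideanSpace ℝ (Fin p))
    {η : EuclideanSpace ℝ (Fin p)} {b : ℝ} {A : Set (EuclideanSpace ℝ (Fin p))}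
    (hA : MeasurableSet A) (hη : ∀ x ∈ A, ⟪x, η⟫ = b) :
    expFam ν (θ + η) A =
      ENNReal.ofReal (exp (b - cumulant ν (θ + η) + cumulant ν θ)) * expFam ν θ A := by
  rw [expFam_add, withDensity_apply _ hA, ← setLIntegral_const]
  exact setLIntegral_congr_fun hA fun x hx => by simp only [hη x hx]

end ParameterShift

/-- If `δ` is a direction of recession (`⟪x − y, δ⟫ ≤ 0` for `ν`-a.e. `x`) and
`H = {x | ⟪x − y, δ⟫ = 0}`, then for every `θ` in the natural parameter space and every
`s ≥ 0`: `θ + sδ` is in the natural parameter space and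
`μ_{θ+sδ}(H) = exp(s⟪y, δ⟫ − c(θ + sδ) + c(θ)) · μ_θ(H)`. -/
theorem expFam_measure_hyperplane {p : ℕ} (hp : 0 < p)
    (ν : Measure (EuclideanSpace ℝ (Fin p))) [SigmaFinite ν] (hν : ν ≠ 0)
    (hΘ : {θ : EuclideanSpace ℝ (Fin p) | partitionFn ν θ < ⊤}.Nonempty)
    (y δ : EuclideanSpace ℝ (Fin p))
    (hrec : ∀ᵐ x ∂ν, ⟪x - y, δ⟫ ≤ 0)
    (H : Set (EuclideanSpace ℝ (Fin p)))
    (hH : H = {x : EuclideanSpace ℝ (Fin p) | ⟪x - y, δ⟫ = 0}) :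
    ∀ θ : EuclideanSpace ℝ (Fin p), partitionFn ν θ < ⊤ → ∀ s : ℝ, 0 ≤ s →
      partitionFn ν (θ + s • δ) < ⊤ ∧
        expFam ν (θ + s • δ) H =
          ENNReal.ofReal
              (Real.exp (s * ⟪y, δ⟫ - cumulant ν (θ + s • δ) + cumulant ν θ)) *
            expFam ν θ H := by
  intro θ hθ s hs
  have inner_le : ∀ᵐ x ∂ν, ⟪x, s • δ⟫ ≤ s * ⟪y, δ⟫ := by
    filter_upwards [hrec] with x hx
    rw [inner_sub_left, sub_nonpos] at hx
    rw [real_inner_smul_right]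
    gcongr
  have inner_eq : ∀ x ∈ H, ⟪x, s • δ⟫ = s * ⟪y, δ⟫ := by
    intro x hx
    rw [hH, mem_ofPred_eq, inner_sub_left, sub_eq_zero] at hx
    rw [real_inner_smul_right, hx]
  have measurableSet_H : MeasurableSet H :=
    hH ▸ measurableSet_eq_fun (by fun_prop) measurable_const
  exact ⟨(partitionFn_add_le_of_ae_inner_le θ inner_le).trans_lt
      (ENNReal.mul_lt_top ENNReal.ofReal_lt_top hθ),
    expFam_add_apply_of_inner_eq θ measurableSet_H inner_eq⟩
end

section
/- Let C ⊆ ℝ^p be convex with y ∈ C, and let V ⊆ ℝ^p be a finite set such that {s(w − y) : w ∈ C, s ≥ 0} = pos V. Let L = {v ∈ V : −v ∈ pos V}, and let δ ∈ ℝ^p satisfy ⟨w, δ⟩ = 0 for all w ∈ L and ⟨w, δ⟩ < 0 for all w ∈ V \ L. Set H = {w ∈ ℝ^p : ⟨w − y, δ⟩ = 0}. Then {s(w − y) : w ∈ C ∩ H, s ≥ 0} equals the linear span of L, and C ∩ H = C ∩ (y + span L), where y + span L = {y + v : v ∈ span L}. -/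
open Set
open scoped RealInnerProductSpace

/-- `posCone V` is the set of all nonnegative linear combinations of elements of the finite
set `V`, i.e. the finitely generated convex cone spanned by `V`. -/
def posCone {p : ℕ} (V : Finset (EuclideanSpace ℝ (Fin p))) :
    Set (EuclideanSpace ℝ (Fin p)) :=
  {x | ∃ c : EuclideanSpace ℝ (Fin p) → ℝ, (∀ v ∈ V, 0 ≤ c v) ∧ x = ∑ v ∈ V, c v • v}

/-!
Let `K` be the cone generated by `V` and `f = ⟪·, δ⟫`. Since `f ≤ 0` on `V`, a nonnegative
combination of `V` on which `f` vanishes only involves generators on which `f` vanishes, that is,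
elements of `L`. Hence `K ∩ {f = 0}` lies in `span L`; the reverse inclusion holds because the
lineality space `K ∩ -K` is a subspace containing `L`. Both claims follow: `K` consists of the
nonnegative multiples of `w - y` with `w ∈ C`, and a positive multiple of `w - y` lies in `{f = 0}`
exactly when `w ∈ H`.
-/

section Hull

variable {R E : Type*} [Semiring R] [PartialOrder R] [IsOrderedRing R] [AddCommMonoid E]
  [Module R E] {V : Set E} {f : E →ₗ[R] R} {x : E}

theorem map_nonpos_of_mem_hull (hf : ∀ v ∈ V, f v ≤ 0) (hx : x ∈ PointedCone.hull R V) :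
    f x ≤ 0 := by
  induction hx using Submodule.span_induction with
  | mem v hv => exact hf v hv
  | zero => exact (map_zero f).le
  | add a b _ _ ha hb => exact (map_add f a b).trans_le (add_nonpos ha hb)
  | smul r a _ ha =>
    exact (map_smul f (r : R) a).trans_le (mul_nonpos_of_nonneg_of_nonpos r.2 ha)

theorem mem_hull_zeros_of_mem_hull [NoZeroDivisors R] (hf : ∀ v ∈ V, f v ≤ 0)
    (hx : x ∈ PointedCone.hull R V) (hfx : f x = 0) :
    x ∈ PointedCone.hull R {v ∈ V | f v = 0} := by
  induction hx using Submodule.span_induction with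
  | mem v hv => exact PointedCone.subset_hull ⟨hv, hfx⟩
  | zero => exact zero_mem _
  | add a b ha hb iha ihb =>
    have hfa : f a ≤ 0 := map_nonpos_of_mem_hull hf ha
    have hfb : f b ≤ 0 := map_nonpos_of_mem_hull hf hb
    have hadd : f a + f b = 0 := (map_add f a b).symm.trans hfx
    have hfa_zero : f a = 0 := hfa.antisymm (hadd ▸ add_le_of_nonpos_right hfb)
    have hfb_zero : f b = 0 := hfb.antisymm (hadd ▸ add_le_of_nonpos_left hfa)
    exact add_mem (iha hfa_zero) (ihb hfb_zero)
  | smul r a _ iha =>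
    have hmul : (r : R) * f a = 0 := (map_smul f (r : R) a).symm.trans hfx
    rcases mul_eq_zero.mp hmul with hr | hfa
    · obtain rfl : r = 0 := Subtype.ext hr
      rw [zero_smul]
      exact zero_mem _
    · exact Submodule.smul_mem _ r (iha hfa)

end Hull

section Lineal

/-- The set `L` of the generators `v` of the cone `pos V` whose opposite `-v` also lies in
`pos V`. -/
def linealGenerators (R : Type*) {E : Type*} [Semiring R] [PartialOrder R] [IsOrderedRing R]
    [AddCommGroup E] [Module R E] (V : Set E) : Set E :=
  {v | v ∈ V ∧ -v ∈ PointedCone.hull R V}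

variable {R E : Type*} [Ring R] [LinearOrder R] [IsOrderedRing R] [AddCommGroup E] [Module R E]
  {V : Set E} {f : E →ₗ[R] R}

theorem span_linealGenerators_le_lineal :
    Submodule.span R (linealGenerators R V) ≤ (PointedCone.hull R V).lineal :=
  Submodule.span_le.mpr fun _ hv ↦ ⟨PointedCone.subset_hull hv.1, hv.2⟩

theorem hull_inter_zeros_eq_span_linealGenerators [NoZeroDivisors R]
    (hfL : ∀ v ∈ linealGenerators R V, f v = 0)
    (hfV : ∀ v ∈ V \ linealGenerators R V, f v < 0) :
    (PointedCone.hull R V : Set E) ∩ {x | f x = 0} =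
      Submodule.span R (linealGenerators R V) := by
  have hf : ∀ v ∈ V, f v ≤ 0 := fun v hv ↦ by
    by_cases hvL : v ∈ linealGenerators R V
    · exact (hfL v hvL).le
    · exact (hfV v ⟨hv, hvL⟩).le
  have zeros_subset : {v ∈ V | f v = 0} ⊆ linealGenerators R V := fun v ⟨hv, hfv⟩ ↦ by
    by_contra hvL
    exact (hfV v ⟨hv, hvL⟩).ne hfv
  apply Subset.antisymm
  · rintro x ⟨hx, hfx⟩
    exact Submodule.span_mono zeros_subset
      (PointedCone.hull_le_span R _ (mem_hull_zeros_of_mem_hull hf hx hfx))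
  · have span_le_ker : Submodule.span R (linealGenerators R V) ≤ LinearMap.ker f :=
      Submodule.span_le.mpr hfL
    exact fun x hx ↦ ⟨(span_linealGenerators_le_lineal hx).1, span_le_ker hx⟩

end Lineal

section RadialCone

variable {R E : Type*} [Semiring R] [Preorder R] [AddCommGroup E] [Module R E] {C : Set E} {y : E}

variable (R) in
/-- The radial cone of `C` at `y`, also called the cone of feasible directions: the nonnegative
multiples of the vectors from `y` to the points of `C`. -/
def radialCone (C : Set E) (y : E) : Set E :=
  {x | ∃ w ∈ C, ∃ s : R, 0 ≤ s ∧ x = s • (w - y)}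

theorem sub_mem_radialCone [ZeroLEOneClass R] {w : E} (hw : w ∈ C) : w - y ∈ radialCone R C y :=
  ⟨w, hw, 1, zero_le_one, (one_smul R _).symm⟩

theorem radialCone_inter_hyperplane [NoZeroDivisors R] {f : E →ₗ[R] R} (hy : y ∈ C) :
    radialCone R (C ∩ {w | f (w - y) = 0}) y = radialCone R C y ∩ {x | f x = 0} := by
  ext x
  constructor
  · rintro ⟨w, ⟨hwC, hfw : f (w - y) = 0⟩, s, hs, rfl⟩
    exact ⟨⟨w, hwC, s, hs, rfl⟩, by simp [hfw, -map_sub]⟩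
  · rintro ⟨⟨w, hwC, s, hs, rfl⟩, hfx : f (s • (w - y)) = 0⟩
    rw [map_smul, smul_eq_mul] at hfx
    rcases mul_eq_zero.mp hfx with rfl | hfw
    · exact ⟨y, ⟨hy, by simp⟩, 0, le_rfl, by simp⟩
    · exact ⟨w, ⟨hwC, hfw⟩, s, hs, rfl⟩

end RadialCone

theorem tangentCone_inter_hyperplane_eq_span_general {R E : Type*} [Ring R] [LinearOrder R]
    [IsOrderedRing R] [NoZeroDivisors R] [AddCommGroup E] [Module R E] {C V : Set E} {y : E}
    {f : E →ₗ[R] R} (hy : y ∈ C)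
    (hV : radialCone R C y = PointedCone.hull R V)
    (hfL : ∀ v ∈ linealGenerators R V, f v = 0)
    (hfV : ∀ v ∈ V \ linealGenerators R V, f v < 0) :
    radialCone R (C ∩ {w | f (w - y) = 0}) y = Submodule.span R (linealGenerators R V) ∧
      C ∩ {w | f (w - y) = 0} =
        C ∩ {z | ∃ v ∈ Submodule.span R (linealGenerators R V), z = y + v} := by
  have hspan : radialCone R C y ∩ {x | f x = 0} = Submodule.span R (linealGenerators R V) :=
    hV ▸ hull_inter_zeros_eq_span_linealGenerators hfL hfV
  refine ⟨(radialCone_inter_hyperplane hy).trans hspan, ?_⟩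
  ext w
  refine and_congr_right fun hw ↦ ?_
  calc f (w - y) = 0
      ↔ w - y ∈ radialCone R C y ∩ {x | f x = 0} :=
        (and_iff_right (sub_mem_radialCone hw)).symm
    _ ↔ w - y ∈ Submodule.span R (linealGenerators R V) := by rw [hspan, SetLike.mem_coe]
    _ ↔ ∃ v ∈ Submodule.span R (linealGenerators R V), w = y + v := by
        simp [← sub_eq_iff_eq_add']

theorem posCone_eq_hull {p : ℕ} (V : Finset (EuclideanSpace ℝ (Fin p))) :
    posCone V = PointedCone.hull ℝ (V : Set (EuclideanSpace ℝ (Fin p))) := by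
  apply Subset.antisymm
  · rintro _ ⟨c, hc, rfl⟩
    exact sum_mem fun v hv ↦ PointedCone.smul_mem _ (hc v hv) (PointedCone.subset_hull hv)
  · intro x hx
    obtain ⟨c, -, rfl⟩ := Submodule.mem_span_finset.mp hx
    exact ⟨fun v ↦ c v, fun v _ ↦ (c v).2, rfl⟩

/-- Let `C ⊆ ℝ^p` be convex with `y ∈ C`, and `V` finite with
`{s(w − y) | w ∈ C, s ≥ 0} = pos V`. With `L = {v ∈ V | −v ∈ pos V}`, let `δ` satisfy
`⟪w, δ⟫ = 0` on `L` and `⟪w, δ⟫ < 0` on `V \ L`, and set `H = {w | ⟪w − y, δ⟫ = 0}`. Then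
`{s(w − y) | w ∈ C ∩ H, s ≥ 0} = span L` and `C ∩ H = C ∩ (y + span L)`. -/
theorem tangentCone_inter_hyperplane_eq_span {p : ℕ}
    (C : Set (EuclideanSpace ℝ (Fin p))) (hCconv : Convex ℝ C)
    (y : EuclideanSpace ℝ (Fin p)) (hy : y ∈ C)
    (V : Finset (EuclideanSpace ℝ (Fin p)))
    (hV : {x : EuclideanSpace ℝ (Fin p) | ∃ w ∈ C, ∃ s : ℝ, 0 ≤ s ∧ x = s • (w - y)} =
      posCone V)
    (δ : EuclideanSpace ℝ (Fin p))
    (hδL : ∀ w ∈ {v : EuclideanSpace ℝ (Fin p) | v ∈ V ∧ -v ∈ posCone V}, ⟪w, δ⟫ = 0)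
    (hδV : ∀ w ∈ (V : Set (EuclideanSpace ℝ (Fin p))) \
      {v : EuclideanSpace ℝ (Fin p) | v ∈ V ∧ -v ∈ posCone V}, ⟪w, δ⟫ < 0)
    (H : Set (EuclideanSpace ℝ (Fin p)))
    (hH : H = {w : EuclideanSpace ℝ (Fin p) | ⟪w - y, δ⟫ = 0}) :
    {x : EuclideanSpace ℝ (Fin p) | ∃ w ∈ C ∩ H, ∃ s : ℝ, 0 ≤ s ∧ x = s • (w - y)} =
        (Submodule.span ℝ {v : EuclideanSpace ℝ (Fin p) | v ∈ V ∧ -v ∈ posCone V} :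
          Set (EuclideanSpace ℝ (Fin p))) ∧
      C ∩ H = C ∩ {z : EuclideanSpace ℝ (Fin p) |
        ∃ v ∈ Submodule.span ℝ {v : EuclideanSpace ℝ (Fin p) | v ∈ V ∧ -v ∈ posCone V},
          z = y + v} := by
  simp only [posCone_eq_hull, SetLike.mem_coe, hH] at hV hδL hδV ⊢
  exact tangentCone_inter_hyperplane_eq_span_general (f := (innerₗ _).flip δ) hy hV hδL hδV
end

section
/- Let C ⊆ ℝ^p be convex with y ∈ C, and let V ⊆ ℝ^p be a finite set such that for every w ∈ C the vector w − y lies in pos V. Let η ∈ ℝ^p, set L = {v ∈ V : ⟨v, η⟩ = 0}, and assume ⟨v, η⟩ < 0 for every v ∈ V \ L. Define H = {w ∈ ℝ^p : ⟨w − y, η⟩ = 0}. Then C ∩ H = C ∩ (y + span L), where y + span L = {y + v : v ∈ span L}. -/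
open Set
open scoped RealInnerProductSpace

section ConeHull

variable {R M : Type*} [Semiring R] [PartialOrder R] [IsOrderedRing R]

section

variable [AddCommMonoid M] [Module R M] {f : M →ₗ[R] R} {s : Set M} {x : M}

theorem apply_nonpos_of_mem_hull (hf : ∀ v ∈ s, f v ≤ 0) (hx : x ∈ PointedCone.hull R s) :
    f x ≤ 0 := by
  induction hx using Submodule.span_induction with
  | mem v hv => exact hf v hv
  | zero => exact (map_zero f).le
  | add a b _ _ ha hb => exact (map_add f a b).trans_le (add_nonpos ha hb)
  | smul r a _ ha =>
    exact (map_smul f r.1 a).trans_le (mul_nonpos_of_nonneg_of_nonpos r.2 ha)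

-- A sum of nonpositive values vanishes only if each term does.
theorem mem_hull_sep_of_apply_eq_zero [NoZeroDivisors R] (hf : ∀ v ∈ s, f v ≤ 0)
    (hx : x ∈ PointedCone.hull R s) (hfx : f x = 0) :
    x ∈ PointedCone.hull R {v ∈ s | f v = 0} := by
  induction hx using Submodule.span_induction with
  | mem v hv => exact PointedCone.subset_hull ⟨hv, hfx⟩
  | zero => exact zero_mem _
  | add a b ha hb iha ihb =>
    have hsum : 0 = f a + f b := hfx.symm.trans (map_add f a b)
    have hfa_nonpos : f a ≤ 0 := apply_nonpos_of_mem_hull hf ha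
    have hfb_nonpos : f b ≤ 0 := apply_nonpos_of_mem_hull hf hb
    have hfa : f a = 0 := hfa_nonpos.antisymm (hsum.trans_le (add_le_of_nonpos_right hfb_nonpos))
    have hfb : f b = 0 := hfb_nonpos.antisymm (hsum.trans_le (add_le_of_nonpos_left hfa_nonpos))
    exact add_mem (iha hfa) (ihb hfb)
  | smul r a _ iha =>
    have hmul : (r : R) * f a = 0 := (map_smul f r.1 a).symm.trans hfx
    rcases mul_eq_zero.1 hmul with hr | hfa
    · rw [show r = 0 from Subtype.ext hr, zero_smul]
      exact zero_mem _
    · exact Submodule.smul_mem _ r (iha hfa)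

theorem apply_eq_zero_iff_mem_span_sep [NoZeroDivisors R] (hf : ∀ v ∈ s, f v ≤ 0)
    (hx : x ∈ PointedCone.hull R s) :
    f x = 0 ↔ x ∈ Submodule.span R {v ∈ s | f v = 0} := by
  have span_le_ker : Submodule.span R {v ∈ s | f v = 0} ≤ LinearMap.ker f :=
    Submodule.span_le.2 fun _ hv ↦ hv.2
  exact ⟨fun hfx ↦ PointedCone.hull_le_span R _ (mem_hull_sep_of_apply_eq_zero hf hx hfx),
    fun hspan ↦ span_le_ker hspan⟩

end

theorem inter_hyperplane_eq_inter_span_general [NoZeroDivisors R] [AddCommGroup M] [Module R M]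
    {C : Set M} {y : M} {V : Set M} (hV : ∀ w ∈ C, w - y ∈ PointedCone.hull R V)
    (f : M →ₗ[R] R) (hf : ∀ v ∈ V, f v ≤ 0) :
    C ∩ {w | f (w - y) = 0} =
      C ∩ {z | ∃ v ∈ Submodule.span R {v ∈ V | f v = 0}, z = y + v} := by
  ext w
  refine and_congr_right fun hw ↦ ?_
  calc
    f (w - y) = 0 ↔ w - y ∈ Submodule.span R {v ∈ V | f v = 0} :=
      apply_eq_zero_iff_mem_span_sep hf (hV w hw)
    _ ↔ ∃ v ∈ Submodule.span R {v ∈ V | f v = 0}, w = y + v := by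
      simp only [← sub_eq_iff_eq_add', exists_eq_right']

end ConeHull

theorem posCone_subset_hull {p : ℕ} (V : Finset (EuclideanSpace ℝ (Fin p))) :
    posCone V ⊆ PointedCone.hull ℝ (V : Set (EuclideanSpace ℝ (Fin p))) := by
  rintro _ ⟨c, hc, rfl⟩
  exact sum_mem fun v hv ↦ PointedCone.smul_mem _ (hc v hv) (PointedCone.subset_hull hv)

/-- Let `C ⊆ ℝ^p` be convex with `y ∈ C`, and `V` finite with `w − y ∈ pos V` for every
`w ∈ C`. Let `η ∈ ℝ^p`, `L = {v ∈ V | ⟪v, η⟫ = 0}`, and suppose `⟪v, η⟫ < 0` for every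
`v ∈ V \ L`. With `H = {w | ⟪w − y, η⟫ = 0}`, we have `C ∩ H = C ∩ (y + span L)`. -/
theorem inter_hyperplane_eq_inter_span {p : ℕ}
    (C : Set (EuclideanSpace ℝ (Fin p))) (hCconv : Convex ℝ C)
    (y : EuclideanSpace ℝ (Fin p)) (hy : y ∈ C)
    (V : Finset (EuclideanSpace ℝ (Fin p)))
    (hV : ∀ w ∈ C, w - y ∈ posCone V)
    (η : EuclideanSpace ℝ (Fin p))
    (hη : ∀ v ∈ (V : Set (EuclideanSpace ℝ (Fin p))) \
      {v : EuclideanSpace ℝ (Fin p) | v ∈ V ∧ ⟪v, η⟫ = 0}, ⟪v, η⟫ < 0)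
    (H : Set (EuclideanSpace ℝ (Fin p)))
    (hH : H = {w : EuclideanSpace ℝ (Fin p) | ⟪w - y, η⟫ = 0}) :
    C ∩ H = C ∩ {z : EuclideanSpace ℝ (Fin p) |
      ∃ v ∈ Submodule.span ℝ {v : EuclideanSpace ℝ (Fin p) | v ∈ V ∧ ⟪v, η⟫ = 0},
        z = y + v} := by
  have inner_nonpos : ∀ v ∈ V, ⟪v, η⟫ ≤ 0 := fun v hv ↦
    le_of_not_gt fun hpos ↦ (hη v ⟨hv, fun hL ↦ hpos.ne' hL.2⟩).not_gt hpos
  exact hH ▸ inter_hyperplane_eq_inter_span_general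
    (fun w hw ↦ posCone_subset_hull V (hV w hw)) ((innerₗ _).flip η) inner_nonpos
end
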